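/- For a von Neumann algebra R, the following are equivalent: (i) every finitely additive probability measure on the projection lattice P(R) extends to a state of R; (ii) every global section of the state presheaf S_R (assigning to each abelian von Neumann subalgebra A its state space S(A), with ordinary restriction of functionals) is induced by a state of R. -/

import Mathlib

variable {H : Type*} [NormedAddCommGroup H] [InnerProductSpace ℂ H] [CompleteSpace H]

/-- A projection (selfadjoint idempotent) in `B(H)`. -/
def IsProjOp (p : H →L[ℂ] H) : Prop := IsSelfAdjoint p ∧ IsIdempotentElem p

/-- A state on a (sub)set `R` of `B(H)`: normalized, linear on `R`, positive. -/
def IsStateOn (R : Set (H →L[ℂ] H)) (φ : (H →L[ℂ] H) → ℂ) : Prop :=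
  φ 1 = 1 ∧
  (∀ a ∈ R, ∀ b ∈ R, φ (a + b) = φ a + φ b) ∧
  (∀ c : ℂ, ∀ a ∈ R, φ (c • a) = c * φ a) ∧
  (∀ a ∈ R, 0 ≤ (φ (star a * a)).re ∧ (φ (star a * a)).im = 0)

/-- A finitely additive probability measure on the projection lattice of `R`. -/
def IsProbMeasureOn (R : VonNeumannAlgebra H) (μ : (H →L[ℂ] H) → ℝ) : Prop :=
  μ 1 = 1 ∧ (∀ p, p ∈ R → IsProjOp p → 0 ≤ μ p ∧ μ p ≤ 1) ∧
  ∀ p q, p ∈ R → q ∈ R → IsProjOp p → IsProjOp q → p * q = 0 → μ (p + q) = μ p + μ q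

/-- An abelian von Neumann algebra. -/
def IsAbelianVN (A : VonNeumannAlgebra H) : Prop := ∀ a ∈ A, ∀ b ∈ A, a * b = b * a

/-- A global section of the state presheaf of `R`: a family of states, one on
each abelian von Neumann subalgebra of `R`, compatible under ordinary
restriction. -/
def IsStateSection (R : VonNeumannAlgebra H)
    (Φ : VonNeumannAlgebra H → (H →L[ℂ] H) → ℂ) : Prop :=
  (∀ A : VonNeumannAlgebra H, IsAbelianVN A → (A : Set (H →L[ℂ] H)) ⊆ R →
      IsStateOn (A : Set (H →L[ℂ] H)) (Φ A)) ∧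
  ∀ A B : VonNeumannAlgebra H, IsAbelianVN A → IsAbelianVN B →
    (A : Set (H →L[ℂ] H)) ⊆ R → (B : Set (H →L[ℂ] H)) ⊆ R →
    (A : Set (H →L[ℂ] H)) ⊆ (B : Set (H →L[ℂ] H)) → ∀ a ∈ A, Φ A a = Φ B a

/-!
Each element between `0` and `1` of a von Neumann algebra is half the sum of a projection and
another such element (take the support projection of the positive part of `2a - 1`), so iterating
expands it dyadically in projections and a state is determined by its values on projections.
Orthogonal projections generate an abelian subalgebra, so a section of the state presheaf gives a
measure. Conversely, on an abelian algebra a measure is positive on every real combination of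
projections which is positive as an operator, so by the M. Riesz extension theorem it extends to a
state; uniqueness makes these states compatible.
-/

section

open Submodule
open scoped ComplexOrder ComplexStarModule

variable {A R : VonNeumannAlgebra H} {φ ψ : (H →L[ℂ] H) → ℂ} {μ : (H →L[ℂ] H) → ℝ}
  {Φ : VonNeumannAlgebra H → (H →L[ℂ] H) → ℂ}

instance vonNeumannAlgebra_smulMemClass : SMulMemClass (VonNeumannAlgebra H) ℂ (H →L[ℂ] H) where
  smul_mem {A} c _ ha := A.toStarSubalgebra.smul_mem ha c

theorem real_smul_mem {a : H →L[ℂ] H} (c : ℝ) (ha : a ∈ A) : c • a ∈ A :=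
  Complex.coe_smul c a ▸ SMulMemClass.smul_mem (c : ℂ) ha

theorem mem_iff_forall_commutant_commute {a : H →L[ℂ] H} :
    a ∈ A ↔ ∀ y ∈ A.commutant, Commute a y := by
  conv_lhs => rw [← A.commutant_commutant, VonNeumannAlgebra.mem_commutant_iff]
  exact forall₂_congr fun _ _ ↦ eq_comm

theorem cfcₙ_real_mem {a : H →L[ℂ] H} (ha : a ∈ A) (f : ℝ → ℝ) : cfcₙ f a ∈ A :=
  mem_iff_forall_commutant_commute.2 fun y hy ↦
    (mem_iff_forall_commutant_commute.1 ha y hy).cfcₙ_real f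

theorem posPart_mem {a : H →L[ℂ] H} (ha : a ∈ A) : a⁺ ∈ A :=
  cfcₙ_real_mem ha _

theorem negPart_mem {a : H →L[ℂ] H} (ha : a ∈ A) : a⁻ ∈ A :=
  cfcₙ_real_mem ha _

theorem sqrt_mem {a : H →L[ℂ] H} (ha : a ∈ A) (ha₀ : 0 ≤ a) : CFC.sqrt a ∈ A :=
  CFC.sqrt_eq_real_sqrt a ha₀ ▸ cfcₙ_real_mem ha _

theorem realPart_mem {a : H →L[ℂ] H} (ha : a ∈ A) : (ℜ a : H →L[ℂ] H) ∈ A := by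
  rw [realPart_apply_coe]
  exact real_smul_mem _ (add_mem ha (star_mem ha))

theorem imaginaryPart_mem {a : H →L[ℂ] H} (ha : a ∈ A) : (ℑ a : H →L[ℂ] H) ∈ A := by
  rw [imaginaryPart_apply_coe]
  exact SMulMemClass.smul_mem _ (real_smul_mem _ (sub_mem ha (star_mem ha)))

/-- The projection lattice `P(A)` of a von Neumann algebra, as a set of operators. -/
def projections (A : VonNeumannAlgebra H) : Set (H →L[ℂ] H) :=
  {p | p ∈ A ∧ IsStarProjection p}

/-- The effects of a von Neumann algebra: its elements between `0` and `1`. -/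
def effects (A : VonNeumannAlgebra H) : Set (H →L[ℂ] H) :=
  {a | a ∈ A ∧ 0 ≤ a ∧ a ≤ 1}

theorem mem_projections_iff {p : H →L[ℂ] H} : p ∈ projections A ↔ p ∈ A ∧ IsProjOp p :=
  and_congr_right' ((isStarProjection_iff p).trans and_comm)

theorem one_mem_projections : 1 ∈ projections A :=
  ⟨one_mem A, .one _⟩

theorem one_sub_mem_projections {p : H →L[ℂ] H} (hp : p ∈ projections A) :
    1 - p ∈ projections A :=
  ⟨sub_mem (one_mem A) hp.1, hp.2.one_sub⟩

theorem projections_subset_effects : projections A ⊆ effects A := fun _ hp ↦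
  ⟨hp.1, hp.2.nonneg, sub_nonneg.1 hp.2.one_sub.nonneg⟩

theorem mem_span_effects_of_nonneg {a : H →L[ℂ] H} (ha : a ∈ A) (ha₀ : 0 ≤ a) :
    a ∈ span ℂ (effects A) := by
  rcases eq_or_ne a 0 with rfl | ha_ne
  · exact zero_mem _
  set c : ℂ := (‖a‖ : ℂ)
  have hc : c ≠ 0 := by simpa [c] using ha_ne
  have hca₀ : 0 ≤ c⁻¹ • a := smul_nonneg (inv_nonneg.2 (by simp [c])) ha₀
  have hca₁ : c⁻¹ • a ≤ 1 := by
    rw [← CStarAlgebra.norm_le_one_iff_of_nonneg _ hca₀, norm_smul]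
    simp [c, ha_ne]
  rw [← smul_inv_smul₀ hc a]
  exact smul_mem _ _ (subset_span ⟨SMulMemClass.smul_mem _ ha, hca₀, hca₁⟩)

theorem mem_span_effects {a : H →L[ℂ] H} (ha : a ∈ A) : a ∈ span ℂ (effects A) := by
  have posPart_mem_span {b : H →L[ℂ] H} (hb : b ∈ A) : b⁺ ∈ span ℂ (effects A) :=
    mem_span_effects_of_nonneg (posPart_mem hb) (CFC.posPart_nonneg b)
  have negPart_mem_span {b : H →L[ℂ] H} (hb : b ∈ A) : b⁻ ∈ span ℂ (effects A) :=
    mem_span_effects_of_nonneg (negPart_mem hb) (CFC.negPart_nonneg b)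
  rw [← CStarAlgebra.linear_combination_nonneg a]
  exact add_mem
    (sub_mem (posPart_mem_span (realPart_mem ha)) (negPart_mem_span (realPart_mem ha)))
    (sub_mem (smul_mem _ _ (posPart_mem_span (imaginaryPart_mem ha)))
      (smul_mem _ _ (negPart_mem_span (imaginaryPart_mem ha))))

theorem starProjection_ker_mem {a : H →L[ℂ] H} (ha : a ∈ A) : a.ker.starProjection ∈ A := by
  rw [VonNeumannAlgebra.IsStarProjection.mem_iff isStarProjection_starProjection]
  intro y hy
  rw [range_starProjection, Module.End.mem_invtSubmodule]
  intro v (hv : a v = 0)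
  have hay : a (y v) = y (a v) :=
    congr($((mem_iff_forall_commutant_commute.1 ha y hy).eq) v)
  simpa [hv] using hay

theorem exists_projection_mul_eq_self {a : H →L[ℂ] H} (ha : a ∈ A) :
    ∃ p ∈ projections A, a * p = a ∧ ∀ b, a * b = 0 → (1 - p) * b = b := by
  refine ⟨1 - a.ker.starProjection,
    one_sub_mem_projections ⟨starProjection_ker_mem ha, isStarProjection_starProjection⟩, ?_, ?_⟩
  · rw [mul_sub, mul_one, sub_eq_self]
    ext v
    exact starProjection_apply_mem a.ker v
  · intro b hab
    rw [sub_sub_cancel]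
    ext v
    exact starProjection_eq_self_iff.2 congr($hab v)

theorem le_projection_of_le_one_of_mul_eq_self {B : Type*} [Ring B] [StarRing B] [PartialOrder B]
    [StarOrderedRing B] {a p : B} (hp : IsStarProjection p) (ha₀ : 0 ≤ a) (ha₁ : a ≤ 1)
    (hap : a * p = a) : a ≤ p := by
  have hpa : p * a = a := by
    simpa [ha₀.star_eq, hp.isSelfAdjoint.star_eq] using congr(star $hap)
  simpa [hpa, hap, hp.isIdempotentElem.eq] using hp.isSelfAdjoint.conjugate_le_conjugate ha₁

theorem exists_projection_posPart_le_negPart_le {a : H →L[ℂ] H} (ha : a ∈ A) (ha₁ : ‖a‖ ≤ 1) :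
    ∃ p ∈ projections A, a⁺ ≤ p ∧ a⁻ ≤ 1 - p := by
  have hpos : a⁺ ≤ 1 := (CStarAlgebra.norm_le_one_iff_of_nonneg _ (CFC.posPart_nonneg a)).1
    ((CStarAlgebra.norm_posPart_le a).trans ha₁)
  have hneg : a⁻ ≤ 1 := (CStarAlgebra.norm_le_one_iff_of_nonneg _ (CFC.negPart_nonneg a)).1
    ((CStarAlgebra.norm_negPart_le a).trans ha₁)
  obtain ⟨p, hp, hp_pos, hp_neg⟩ := exists_projection_mul_eq_self (posPart_mem ha)
  have hneg_mul : a⁻ * (1 - p) = a⁻ := by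
    simpa [(CFC.negPart_nonneg a).star_eq, hp.2.isSelfAdjoint.star_eq]
      using congr(star $(hp_neg _ (CFC.posPart_mul_negPart a)))
  exact ⟨p, hp,
    le_projection_of_le_one_of_mul_eq_self hp.2 (CFC.posPart_nonneg a) hpos hp_pos,
    le_projection_of_le_one_of_mul_eq_self hp.2.one_sub (CFC.negPart_nonneg a) hneg hneg_mul⟩

theorem norm_add_self_sub_one_le_one {B : Type*} [CStarAlgebra B] [PartialOrder B]
    [StarOrderedRing B] {a : B} (ha₀ : 0 ≤ a) (ha₁ : a ≤ 1) : ‖a + a - 1‖ ≤ 1 := by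
  have hd : IsSelfAdjoint (a + a - 1) := (ha₀.isSelfAdjoint.add ha₀.isSelfAdjoint).sub (.one _)
  have hmul : 0 ≤ a * (1 - a) :=
    ((Commute.one_right a).sub_right (.refl a)).mul_nonneg ha₀ (sub_nonneg.2 ha₁)
  rw [← sq_le_one_iff₀ (norm_nonneg _), ← hd.norm_mul_self,
    CStarAlgebra.norm_le_one_iff_of_nonneg _ hd.mul_self_nonneg, ← sub_nonneg]
  convert nsmul_nonneg hmul 4 using 1
  noncomm_ring

theorem exists_projection_effect_eq_half_add {a : H →L[ℂ] H} (ha : a ∈ effects A) :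
    ∃ p ∈ projections A, ∃ b ∈ effects A, a = (1 / 2 : ℂ) • (p + b) := by
  obtain ⟨haA, ha₀, ha₁⟩ := ha
  set d := a + a - 1
  have hd : d ∈ A := sub_mem (add_mem haA haA) (one_mem A)
  have hd_sa : IsSelfAdjoint d := (ha₀.isSelfAdjoint.add ha₀.isSelfAdjoint).sub (.one _)
  obtain ⟨p, hp, hdp, hdp'⟩ :=
    exists_projection_posPart_le_negPart_le hd (norm_add_self_sub_one_le_one ha₀ ha₁)
  have hb : a + a - p = d⁺ + (1 - p - d⁻) := by
    have : a + a = d⁺ - d⁻ + 1 := by rw [CFC.posPart_sub_negPart d hd_sa]; simp [d]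
    rw [this]; abel
  refine ⟨p, hp, a + a - p, ⟨sub_mem (add_mem haA haA) hp.1, ?_, ?_⟩, ?_⟩
  · rw [hb]
    exact add_nonneg (CFC.posPart_nonneg d) (sub_nonneg.2 hdp')
  · calc a + a - p = d⁺ + (1 - p - d⁻) := hb
      _ ≤ p + (1 - p) := add_le_add hdp (sub_le_self _ (CFC.negPart_nonneg d))
      _ = 1 := add_sub_cancel p 1
  · rw [add_sub_cancel, ← two_smul ℂ a, smul_smul]
    norm_num

theorem exists_mem_span_projections_add_smul_effect (n : ℕ) {a : H →L[ℂ] H} (ha : a ∈ effects A) :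
    ∃ x ∈ span ℂ (projections A), ∃ b ∈ effects A, a = x + (1 / 2 : ℂ) ^ n • b := by
  induction n generalizing a with
  | zero => exact ⟨0, zero_mem _, a, ha, by simp⟩
  | succ n ih =>
    obtain ⟨p, hp, b, hb, rfl⟩ := exists_projection_effect_eq_half_add ha
    obtain ⟨x, hx, e, he, rfl⟩ := ih hb
    refine ⟨(1 / 2 : ℂ) • (p + x), smul_mem _ _ (add_mem (subset_span hp) hx), e, he, ?_⟩
    rw [pow_succ', mul_smul, ← smul_add, add_assoc]

theorem IsStateOn.mono {s t : Set (H →L[ℂ] H)} (hφ : IsStateOn t φ) (hst : s ⊆ t) :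
    IsStateOn s φ :=
  ⟨hφ.1, fun a ha b hb ↦ hφ.2.1 a (hst ha) b (hst hb), fun c a ha ↦ hφ.2.2.1 c a (hst ha),
    fun a ha ↦ hφ.2.2.2 a (hst ha)⟩

theorem IsStateOn.apply_nonneg (hφ : IsStateOn (A : Set (H →L[ℂ] H)) φ) {a : H →L[ℂ] H}
    (ha : a ∈ A) (ha₀ : 0 ≤ a) : 0 ≤ φ a := by
  have hsqrt := hφ.2.2.2 (CFC.sqrt a) (sqrt_mem ha ha₀)
  rw [(CFC.sqrt_nonneg a).star_eq, CFC.sqrt_mul_sqrt_self a ha₀] at hsqrt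
  exact Complex.nonneg_iff.2 ⟨hsqrt.1, hsqrt.2.symm⟩

theorem IsStateOn.apply_le_one (hφ : IsStateOn (A : Set (H →L[ℂ] H)) φ) {a : H →L[ℂ] H}
    (ha : a ∈ A) (ha₁ : a ≤ 1) : φ a ≤ 1 := by
  have hsub : 1 - a ∈ A := sub_mem (one_mem A) ha
  calc φ a ≤ φ (1 - a) + φ a :=
        le_add_of_nonneg_left (hφ.apply_nonneg hsub (sub_nonneg.2 ha₁))
    _ = φ (1 - a + a) := (hφ.2.1 _ hsub a ha).symm
    _ = 1 := by rw [sub_add_cancel, hφ.1]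

theorem IsStateOn.norm_apply_le_one (hφ : IsStateOn (A : Set (H →L[ℂ] H)) φ) {a : H →L[ℂ] H}
    (ha : a ∈ effects A) : ‖φ a‖ ≤ 1 :=
  (CStarAlgebra.norm_le_one_iff_of_nonneg _ (hφ.apply_nonneg ha.1 ha.2.1)).2
    (hφ.apply_le_one ha.1 ha.2.2)

theorem IsStateOn.mem_and_apply_eq_of_mem_span (hφ : IsStateOn (A : Set (H →L[ℂ] H)) φ)
    (hψ : IsStateOn (A : Set (H →L[ℂ] H)) ψ) {s : Set (H →L[ℂ] H)} (hsA : s ⊆ A)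
    (hs : Set.EqOn φ ψ s) {x : H →L[ℂ] H} (hx : x ∈ span ℂ s) : x ∈ A ∧ φ x = ψ x := by
  induction hx using span_induction with
  | mem x hx => exact ⟨hsA hx, hs hx⟩
  | zero =>
    refine ⟨zero_mem A, ?_⟩
    rw [← zero_smul ℂ (1 : H →L[ℂ] H), hφ.2.2.1 0 1 (one_mem A), hψ.2.2.1 0 1 (one_mem A),
      zero_mul, zero_mul]
  | add x y _ _ hx hy =>
    exact ⟨add_mem hx.1 hy.1,
      by rw [hφ.2.1 x hx.1 y hy.1, hψ.2.1 x hx.1 y hy.1, hx.2, hy.2]⟩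
  | smul c x _ hx =>
    exact ⟨SMulMemClass.smul_mem c hx.1, by rw [hφ.2.2.1 c x hx.1, hψ.2.2.1 c x hx.1, hx.2]⟩

theorem IsStateOn.eqOn_effects (hφ : IsStateOn (A : Set (H →L[ℂ] H)) φ)
    (hψ : IsStateOn (A : Set (H →L[ℂ] H)) ψ) (h : Set.EqOn φ ψ (projections A)) :
    Set.EqOn φ ψ (effects A) := by
  intro a ha
  have hbound (n : ℕ) : ‖φ a - ψ a‖ ≤ (1 / 2 : ℝ) ^ n * (1 + 1) := by
    obtain ⟨x, hx, e, he, rfl⟩ := exists_mem_span_projections_add_smul_effect n ha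
    obtain ⟨hxA, hx_eq⟩ := hφ.mem_and_apply_eq_of_mem_span hψ (fun _ hp ↦ hp.1) h hx
    have hsmul : (1 / 2 : ℂ) ^ n • e ∈ A := SMulMemClass.smul_mem _ he.1
    calc ‖φ (x + (1 / 2 : ℂ) ^ n • e) - ψ (x + (1 / 2 : ℂ) ^ n • e)‖
        = ‖(1 / 2 : ℂ) ^ n * (φ e - ψ e)‖ := by
          rw [hφ.2.1 x hxA _ hsmul, hψ.2.1 x hxA _ hsmul, hφ.2.2.1 _ e he.1, hψ.2.2.1 _ e he.1,
            hx_eq, add_sub_add_left_eq_sub, mul_sub]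
      _ = (1 / 2 : ℝ) ^ n * ‖φ e - ψ e‖ := by simp
      _ ≤ (1 / 2 : ℝ) ^ n * (1 + 1) := by
          gcongr
          exact norm_sub_le_of_le (hφ.norm_apply_le_one he) (hψ.norm_apply_le_one he)
  have hlim : Filter.Tendsto (fun n : ℕ ↦ (1 / 2 : ℝ) ^ n * (1 + 1)) .atTop (nhds 0) := by
    simpa only [zero_mul] using (tendsto_pow_atTop_nhds_zero_of_lt_one (r := (1 / 2 : ℝ))
      (by norm_num) (by norm_num)).mul_const (1 + 1)
  exact sub_eq_zero.1 (norm_le_zero_iff.1 (ge_of_tendsto' hlim hbound))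

theorem IsStateOn.eqOn_of_eqOn_projections (hφ : IsStateOn (A : Set (H →L[ℂ] H)) φ)
    (hψ : IsStateOn (A : Set (H →L[ℂ] H)) ψ) (h : Set.EqOn φ ψ (projections A)) :
    Set.EqOn φ ψ A := fun _ ha ↦
  (hφ.mem_and_apply_eq_of_mem_span hψ (fun _ hb ↦ hb.1) (hφ.eqOn_effects hψ h)
    (mem_span_effects ha)).2

/-- The von Neumann algebra generated by a set `s` of operators: the double commutant of
`s ∪ star s`. -/
noncomputable def doubleCommutant (s : Set (H →L[ℂ] H)) : VonNeumannAlgebra H where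
  toStarSubalgebra := StarSubalgebra.centralizer ℂ (StarSubalgebra.centralizer ℂ s)
  centralizer_centralizer' := by
    simp

theorem coe_doubleCommutant (s : Set (H →L[ℂ] H)) :
    (doubleCommutant s : Set (H →L[ℂ] H)) = (s ∪ star s).centralizer.centralizer :=
  StarSubalgebra.coe_centralizer_centralizer ℂ s

theorem subset_doubleCommutant (s : Set (H →L[ℂ] H)) : s ⊆ doubleCommutant s := by
  rw [coe_doubleCommutant]
  exact Set.subset_union_left.trans Set.subset_centralizer_centralizer

theorem doubleCommutant_subset {s : Set (H →L[ℂ] H)} (hs : s ⊆ A) :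
    (doubleCommutant s : Set (H →L[ℂ] H)) ⊆ A := by
  have hs_star : star s ⊆ (A : Set (H →L[ℂ] H)) := fun x hx ↦ star_star x ▸ star_mem (hs hx)
  rw [coe_doubleCommutant, ← VonNeumannAlgebra.centralizer_centralizer A]
  exact Set.centralizer_subset (Set.centralizer_subset (Set.union_subset hs hs_star))

theorem isAbelianVN_doubleCommutant {s : Set (H →L[ℂ] H)} (hs : ∀ x ∈ s, IsSelfAdjoint x)
    (hcomm : s.Pairwise Commute) : IsAbelianVN (doubleCommutant s) := by
  have hs_star : star s ⊆ s := fun x hx ↦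
    (IsSelfAdjoint.star_iff.1 (hs _ hx)).star_eq ▸ Set.mem_star.1 hx
  intro a ha b hb
  rw [← SetLike.mem_coe, coe_doubleCommutant, Set.union_eq_left.2 hs_star] at ha hb
  exact Set.centralizer_centralizer_comm_of_comm (fun _ hx _ hy ↦ (hcomm.of_refl hx hy).eq)
    a ha b hb

theorem isAbelianVN_doubleCommutant_singleton {a : H →L[ℂ] H} (ha : IsSelfAdjoint a) :
    IsAbelianVN (doubleCommutant {a}) :=
  isAbelianVN_doubleCommutant (by simpa using ha) (Set.pairwise_singleton _ _)

theorem mem_doubleCommutant_singleton (a : H →L[ℂ] H) : a ∈ doubleCommutant {a} :=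
  subset_doubleCommutant {a} rfl

theorem doubleCommutant_singleton_subset {a : H →L[ℂ] H} (ha : a ∈ A) :
    (doubleCommutant {a} : Set (H →L[ℂ] H)) ⊆ A :=
  doubleCommutant_subset (Set.singleton_subset_iff.2 ha)

/-- The function on projections induced by a global section `Φ`: a projection is evaluated by the
state on the abelian von Neumann algebra it generates. -/
noncomputable def sectionMeasure (Φ : VonNeumannAlgebra H → (H →L[ℂ] H) → ℂ)
    (p : H →L[ℂ] H) : ℝ :=
  (Φ (doubleCommutant {p}) p).re

theorem IsStateSection.ofReal_sectionMeasure (hΦ : IsStateSection R Φ) (hA : IsAbelianVN A)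
    (hAR : (A : Set (H →L[ℂ] H)) ⊆ R) {p : H →L[ℂ] H} (hp : p ∈ projections A) :
    (sectionMeasure Φ p : ℂ) = Φ A p := by
  have hgen : Φ (doubleCommutant {p}) p = Φ A p :=
    hΦ.2 _ A (isAbelianVN_doubleCommutant_singleton hp.2.isSelfAdjoint) hA
      (doubleCommutant_singleton_subset (hAR hp.1)) hAR (doubleCommutant_singleton_subset hp.1)
      p (mem_doubleCommutant_singleton p)
  rw [sectionMeasure, hgen, ← Complex.eq_re_of_ofReal_le
    (r := 0) (by simpa using (hΦ.1 A hA hAR).apply_nonneg hp.1 hp.2.nonneg)]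

theorem IsStateSection.sectionMeasure_add (hΦ : IsStateSection R Φ) {p q : H →L[ℂ] H}
    (hp : p ∈ projections R) (hq : q ∈ projections R) (hpq : p * q = 0) :
    sectionMeasure Φ (p + q) = sectionMeasure Φ p + sectionMeasure Φ q := by
  have hqp : q * p = 0 := by
    simpa [hp.2.isSelfAdjoint.star_eq, hq.2.isSelfAdjoint.star_eq] using congr(star $hpq)
  have hcomm : ({p, q} : Set (H →L[ℂ] H)).Pairwise Commute :=
    Set.pairwise_pair_of_symm.2 fun _ ↦ hpq.trans hqp.symm
  set B := doubleCommutant {p, q}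
  have hB : IsAbelianVN B := isAbelianVN_doubleCommutant
    (by simp [hp.2.isSelfAdjoint, hq.2.isSelfAdjoint]) hcomm
  have hBR : (B : Set (H →L[ℂ] H)) ⊆ R := doubleCommutant_subset (Set.pair_subset hp.1 hq.1)
  have hpB : p ∈ projections B := ⟨subset_doubleCommutant _ (by simp), hp.2⟩
  have hqB : q ∈ projections B := ⟨subset_doubleCommutant _ (by simp), hq.2⟩
  have hpqB : p + q ∈ projections B := ⟨add_mem hpB.1 hqB.1, hp.2.add hq.2 hpq⟩
  apply Complex.ofReal_injective
  rw [Complex.ofReal_add, hΦ.ofReal_sectionMeasure hB hBR hpqB, hΦ.ofReal_sectionMeasure hB hBR hpB,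
    hΦ.ofReal_sectionMeasure hB hBR hqB, (hΦ.1 B hB hBR).2.1 p hpB.1 q hqB.1]

theorem IsStateSection.sectionMeasure_mem_Icc (hΦ : IsStateSection R Φ) {p : H →L[ℂ] H}
    (hp : p ∈ projections R) : sectionMeasure Φ p ∈ Set.Icc 0 1 := by
  have hstate : IsStateOn (doubleCommutant {p}) (Φ (doubleCommutant {p})) :=
    hΦ.1 _ (isAbelianVN_doubleCommutant_singleton hp.2.isSelfAdjoint)
      (doubleCommutant_singleton_subset hp.1)
  have hpA := mem_doubleCommutant_singleton p
  exact ⟨(Complex.le_def.1 (hstate.apply_nonneg hpA hp.2.nonneg)).1,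
    (Complex.le_def.1 (hstate.apply_le_one hpA (projections_subset_effects hp).2.2)).1⟩

theorem IsStateSection.isProbMeasureOn_sectionMeasure (hΦ : IsStateSection R Φ) :
    IsProbMeasureOn R (sectionMeasure Φ) := by
  have hone : Φ (doubleCommutant {1}) 1 = 1 :=
    (hΦ.1 _ (isAbelianVN_doubleCommutant_singleton (.one _))
      (doubleCommutant_singleton_subset (one_mem R))).1
  refine ⟨by rw [sectionMeasure, hone, Complex.one_re], fun p hpR hp ↦ ?_,
    fun p q hpR hqR hp hq ↦ ?_⟩
  · exact hΦ.sectionMeasure_mem_Icc (mem_projections_iff.2 ⟨hpR, hp⟩)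
  · exact hΦ.sectionMeasure_add (mem_projections_iff.2 ⟨hpR, hp⟩)
      (mem_projections_iff.2 ⟨hqR, hq⟩)

theorem IsProbMeasureOn.mono (hμ : IsProbMeasureOn R μ) (hAR : (A : Set (H →L[ℂ] H)) ⊆ R) :
    IsProbMeasureOn A μ :=
  ⟨hμ.1, fun p hp ↦ hμ.2.1 p (hAR hp), fun p q hp hq ↦ hμ.2.2 p q (hAR hp) (hAR hq)⟩

theorem IsProbMeasureOn.apply_nonneg (hμ : IsProbMeasureOn A μ) {p : H →L[ℂ] H}
    (hp : p ∈ projections A) : 0 ≤ μ p :=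
  (hμ.2.1 p hp.1 (mem_projections_iff.1 hp).2).1

theorem IsProbMeasureOn.apply_add (hμ : IsProbMeasureOn A μ) {p q : H →L[ℂ] H}
    (hp : p ∈ projections A) (hq : q ∈ projections A) (hpq : p * q = 0) :
    μ (p + q) = μ p + μ q :=
  hμ.2.2 p q hp.1 hq.1 (mem_projections_iff.1 hp).2 (mem_projections_iff.1 hq).2 hpq

theorem IsProbMeasureOn.apply_zero (hμ : IsProbMeasureOn A μ) : μ 0 = 0 := by
  have hzero : (0 : H →L[ℂ] H) ∈ projections A := ⟨zero_mem A, .zero _⟩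
  simpa using hμ.apply_add hzero hzero (zero_mul 0)

theorem IsAbelianVN.mul_mem_projections (hA : IsAbelianVN A) {p q : H →L[ℂ] H}
    (hp : p ∈ projections A) (hq : q ∈ projections A) : p * q ∈ projections A :=
  ⟨mul_mem hp.1 hq.1, hp.2.mul hq.2 (hA p hp.1 q hq.1)⟩

theorem IsProbMeasureOn.apply_eq_add_mul (hμ : IsProbMeasureOn A μ) (hA : IsAbelianVN A)
    {p q : H →L[ℂ] H} (hp : p ∈ projections A) (hq : q ∈ projections A) :
    μ q = μ (q * p) + μ (q * (1 - p)) := by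
  have hp' := one_sub_mem_projections hp
  have horth : q * p * (q * (1 - p)) = 0 := by
    rw [hA q hq.1 (1 - p) hp'.1, mul_assoc, ← mul_assoc p, hp.2.mul_one_sub_self, zero_mul,
      mul_zero]
  rw [← hμ.apply_add (hA.mul_mem_projections hq hp) (hA.mul_mem_projections hq hp') horth,
    ← mul_add, add_sub_cancel, mul_one]

theorem IsProbMeasureOn.mul_apply_nonneg (hμ : IsProbMeasureOn A μ) {q : H →L[ℂ] H}
    (hq : q ∈ projections A) {c : ℝ} (hcq : 0 ≤ c • q) : 0 ≤ c * μ q := by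
  rcases le_or_gt 0 c with hc | hc
  · exact mul_nonneg hc (hμ.apply_nonneg hq)
  · have hcq_zero : c • q = 0 :=
      (smul_nonpos_of_nonpos_of_nonneg hc.le hq.2.nonneg).antisymm hcq
    rw [(smul_eq_zero.1 hcq_zero).resolve_left hc.ne, hμ.apply_zero, mul_zero]

theorem IsProbMeasureOn.linearCombination_nonneg_of_mul_nonneg (hμ : IsProbMeasureOn A μ)
    (hA : IsAbelianVN A) {ι : Type*} {p : ι → H →L[ℂ] H} (hp : ∀ i, p i ∈ projections A)
    (c : ι → ℝ) (s : Finset ι) (c₀ : ℝ) {q : H →L[ℂ] H} (hq : q ∈ projections A)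
    (h : 0 ≤ (c₀ • 1 + ∑ i ∈ s, c i • p i) * q) :
    0 ≤ c₀ * μ q + ∑ i ∈ s, c i * μ (p i * q) := by
  classical
  induction s using Finset.induction_on generalizing c₀ q with
  | empty => simpa using hμ.mul_apply_nonneg hq (c := c₀) (by simpa using h)
  | insert j s hj ih =>
    -- On `q * p j` the term `c j • p j` is the constant `c j`, and on `q * (1 - p j)` it vanishes:
    -- either way the combination loses a projection.
    have hpj' := one_sub_mem_projections (hp j)
    rw [Finset.sum_insert hj] at h ⊢
    set x := ∑ i ∈ s, c i • p i
    have hx : c₀ • 1 + (c j • p j + x) ∈ A :=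
      add_mem (real_smul_mem _ (one_mem A)) (add_mem (real_smul_mem _ (hp j).1)
        (sum_mem fun i _ ↦ real_smul_mem _ (hp i).1))
    have hlocal {r : H →L[ℂ] H} (hr : r ∈ projections A) :
        0 ≤ (c₀ • 1 + (c j • p j + x)) * (q * r) := by
      rw [← mul_assoc]
      exact Commute.mul_nonneg h hr.2.nonneg (hA _ (mul_mem hx hq.1) _ hr.1)
    have hin := ih (c₀ + c j) (hA.mul_mem_projections hq (hp j)) (by
      convert hlocal (hp j) using 1
      rw [hA q hq.1 (p j) (hp j).1]
      simp only [add_mul, add_smul, smul_mul_assoc, one_mul, ← mul_assoc,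
        (hp j).2.isIdempotentElem.eq, add_assoc])
    have hout := ih c₀ (hA.mul_mem_projections hq hpj') (by
      convert hlocal hpj' using 1
      rw [hA q hq.1 (1 - p j) hpj'.1]
      simp only [add_mul, smul_mul_assoc, ← mul_assoc, (hp j).2.mul_one_sub_self,
        smul_zero, zero_add])
    have hsplit : ∑ i ∈ s, c i * μ (p i * q) = ∑ i ∈ s, c i * μ (p i * (q * p j)) +
        ∑ i ∈ s, c i * μ (p i * (q * (1 - p j))) := by
      simp only [← Finset.sum_add_distrib, ← mul_add, ← mul_assoc,
        ← hμ.apply_eq_add_mul hA (hp j) (hA.mul_mem_projections (hp _) hq)]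
    rw [hsplit, hμ.apply_eq_add_mul hA (hp j) hq, hA (p j) (hp j).1 q hq.1]
    linarith

theorem IsProbMeasureOn.linearCombination_nonneg (hμ : IsProbMeasureOn A μ) (hA : IsAbelianVN A)
    (c : projections A →₀ ℝ)
    (hc : 0 ≤ Finsupp.linearCombination ℝ (fun p : projections A ↦ (p : H →L[ℂ] H)) c) :
    0 ≤ Finsupp.linearCombination ℝ (fun p : projections A ↦ μ p) c := by
  simp only [Finsupp.linearCombination_apply, Finsupp.sum] at hc ⊢
  simpa using hμ.linearCombination_nonneg_of_mul_nonneg hA (fun p ↦ p.2) c c.support 0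
    one_mem_projections (by simpa using hc)

theorem exists_linearMap_comp_eq_of_nonneg {V E : Type*} [AddCommGroup V] [Module ℝ V]
    [AddCommGroup E] [Module ℝ E] (C : PointedCone ℝ E) (T : V →ₗ[ℝ] E) (f : V →ₗ[ℝ] ℝ)
    (hf : ∀ v, T v ∈ C → 0 ≤ f v) (hT : ∀ y, ∃ v, T v + y ∈ C) :
    ∃ g : E →ₗ[ℝ] ℝ, g ∘ₗ T = f ∧ ∀ x ∈ C, 0 ≤ g x := by
  have hker : T.ker ≤ f.ker := fun v (hv : T v = 0) ↦
    (neg_nonneg.1 (map_neg f v ▸ hf (-v) (by simp [hv]))).antisymm (hf v (by simp [hv]))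
  let f' : E →ₗ.[ℝ] ℝ := ⟨T.range, T.ker.liftQ f hker ∘ₗ T.quotKerEquivRange.symm⟩
  have hf' (v : V) : f' ⟨T v, T.mem_range_self v⟩ = f v := by
    change T.ker.liftQ f hker (T.quotKerEquivRange.symm ⟨T v, T.mem_range_self v⟩) = f v
    rw [LinearMap.quotKerEquivRange_symm_apply_image, mkQ_apply, liftQ_apply]
  obtain ⟨g, hg, hg_nonneg⟩ := riesz_extension C f'
    (by rintro ⟨_, v, rfl⟩ hv; exact hf' v ▸ hf v hv)
    (fun y ↦ (hT y).imp' (fun v ↦ ⟨T v, T.mem_range_self v⟩) fun _ hv ↦ hv)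
  exact ⟨g, LinearMap.ext fun v ↦ (hg ⟨T v, T.mem_range_self v⟩).trans (hf' v), hg_nonneg⟩

section accretiveCone

variable {B : Type*} [CStarAlgebra B] [PartialOrder B] [StarOrderedRing B]

variable (B) in
/-- The real cone of elements with positive real part. Working with it instead of the positive cone
of `selfAdjoint B` keeps functionals defined on all of `B`. -/
noncomputable def accretiveCone : PointedCone ℝ B :=
  (PointedCone.positive ℝ B).comap ((selfAdjoint.submodule ℝ B).subtype ∘ₗ realPart)

theorem mem_accretiveCone {x : B} : x ∈ accretiveCone B ↔ 0 ≤ (ℜ x : B) :=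
  Iff.rfl

theorem mem_accretiveCone_of_nonneg {x : B} (hx : 0 ≤ x) : x ∈ accretiveCone B :=
  mem_accretiveCone.2 (hx.isSelfAdjoint.coe_realPart.symm ▸ hx)

theorem norm_realPart_smul_one_add_mem_accretiveCone (y : B) :
    ‖(ℜ y : B)‖ • (1 : B) + y ∈ accretiveCone B := by
  have hnorm := (ℜ y).2.neg_algebraMap_norm_le_self
  rw [neg_le_iff_add_nonneg', Algebra.algebraMap_eq_smul_one] at hnorm
  simpa [mem_accretiveCone] using hnorm

theorem extendRCLike_apply_of_isSelfAdjoint {g : B →ₗ[ℝ] ℝ}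
    (hg : ∀ x ∈ accretiveCone B, 0 ≤ g x) {x : B} (hx : IsSelfAdjoint x) :
    Module.Dual.extendRCLike (𝕜 := ℂ) g x = g x := by
  have hI (y : B) (hy : IsSelfAdjoint y) : 0 ≤ g (Complex.I • y) :=
    hg _ (by simp [mem_accretiveCone, hy.imaginaryPart])
  have hzero : g (Complex.I • x) = 0 :=
    (neg_nonneg.1 (by simpa using hI (-x) hx.neg)).antisymm (hI x hx)
  simp [Module.Dual.extendRCLike_apply, hzero]

end accretiveCone

theorem isStateOn_extendRCLike {g : (H →L[ℂ] H) →ₗ[ℝ] ℝ} (hg_one : g 1 = 1)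
    (hg : ∀ x ∈ accretiveCone (H →L[ℂ] H), 0 ≤ g x) (s : Set (H →L[ℂ] H)) :
    IsStateOn s (Module.Dual.extendRCLike (𝕜 := ℂ) g) := by
  refine ⟨?_, fun a _ b _ ↦ map_add _ a b, fun c a _ ↦ map_smul _ c a, fun a _ ↦ ?_⟩
  · rw [extendRCLike_apply_of_isSelfAdjoint hg (.one _), hg_one, Complex.ofReal_one]
  · rw [extendRCLike_apply_of_isSelfAdjoint hg (.star_mul_self a)]
    exact ⟨hg _ (mem_accretiveCone_of_nonneg (star_mul_self_nonneg a)), Complex.ofReal_im _⟩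

theorem IsProbMeasureOn.exists_isStateOn (hμ : IsProbMeasureOn A μ) (hA : IsAbelianVN A) :
    ∃ φ, IsStateOn (A : Set (H →L[ℂ] H)) φ ∧ ∀ p ∈ projections A, φ p = μ p := by
  set T := Finsupp.linearCombination ℝ (fun p : projections A ↦ (p : H →L[ℂ] H))
  have hT_sa (c : projections A →₀ ℝ) : IsSelfAdjoint (T c) :=
    isSelfAdjoint_sum _ fun p _ ↦ (IsSelfAdjoint.all (c p)).smul p.2.2.isSelfAdjoint
  obtain ⟨g, hgT, hg⟩ := exists_linearMap_comp_eq_of_nonneg (accretiveCone (H →L[ℂ] H)) T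
    (Finsupp.linearCombination ℝ fun p : projections A ↦ μ p)
    (fun c hc ↦ hμ.linearCombination_nonneg hA c ((hT_sa c).coe_realPart ▸ hc))
    (fun y ↦ ⟨.single ⟨1, one_mem_projections⟩ ‖(ℜ y : H →L[ℂ] H)‖, by
      simpa [T] using norm_realPart_smul_one_add_mem_accretiveCone y⟩)
  have hgμ (p : H →L[ℂ] H) (hp : p ∈ projections A) : g p = μ p := by
    simpa [T] using congr($hgT (.single ⟨p, hp⟩ 1))
  refine ⟨_, isStateOn_extendRCLike ((hgμ 1 one_mem_projections).trans hμ.1) hg A,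
    fun p hp ↦ ?_⟩
  rw [extendRCLike_apply_of_isSelfAdjoint hg hp.2.isSelfAdjoint, hgμ p hp]

theorem IsProbMeasureOn.exists_isStateSection (hμ : IsProbMeasureOn R μ) :
    ∃ Φ, IsStateSection R Φ ∧ ∀ A : VonNeumannAlgebra H, IsAbelianVN A →
      (A : Set (H →L[ℂ] H)) ⊆ R → ∀ p ∈ projections A, Φ A p = μ p := by
  choose! Φ hΦ hΦμ using fun (A : VonNeumannAlgebra H)
    (h : IsAbelianVN A ∧ (A : Set (H →L[ℂ] H)) ⊆ R) ↦ (hμ.mono h.2).exists_isStateOn h.1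
  refine ⟨Φ, ⟨fun A hA hAR ↦ hΦ A ⟨hA, hAR⟩, fun A B hA hB hAR hBR hAB a ha ↦ ?_⟩,
    fun A hA hAR ↦ hΦμ A ⟨hA, hAR⟩⟩
  refine (hΦ A ⟨hA, hAR⟩).eqOn_of_eqOn_projections ((hΦ B ⟨hB, hBR⟩).mono hAB) (fun p hp ↦ ?_) ha
  rw [hΦμ A ⟨hA, hAR⟩ p hp, hΦμ B ⟨hB, hBR⟩ p ⟨hAB hp.1, hp.2⟩]

end

/-- for a von Neumann algebra `R`, every finitely additive
probability measure on `P(R)` extends to a state of `R` iff every global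
section of the state presheaf of `R` is induced by a state of `R`. -/
theorem measure_extension_iff_state_sections (R : VonNeumannAlgebra H) :
    (∀ μ : (H →L[ℂ] H) → ℝ, IsProbMeasureOn R μ →
        ∃ φ : (H →L[ℂ] H) → ℂ, IsStateOn (R : Set (H →L[ℂ] H)) φ ∧
          ∀ p, p ∈ R → IsProjOp p → φ p = (μ p : ℂ)) ↔
    (∀ Φ : VonNeumannAlgebra H → (H →L[ℂ] H) → ℂ, IsStateSection R Φ →
        ∃ φ : (H →L[ℂ] H) → ℂ, IsStateOn (R : Set (H →L[ℂ] H)) φ ∧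
          ∀ A : VonNeumannAlgebra H, IsAbelianVN A → (A : Set (H →L[ℂ] H)) ⊆ R →
            ∀ a ∈ A, φ a = Φ A a) := by
  constructor
  · intro h Φ hΦ
    obtain ⟨φ, hφ, hφμ⟩ := h (sectionMeasure Φ) hΦ.isProbMeasureOn_sectionMeasure
    refine ⟨φ, hφ, fun A hA hAR a ha ↦ ?_⟩
    refine (hφ.mono hAR).eqOn_of_eqOn_projections (hΦ.1 A hA hAR) (fun p hp ↦ ?_) ha
    rw [hφμ p (hAR hp.1) (mem_projections_iff.1 hp).2, hΦ.ofReal_sectionMeasure hA hAR hp]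
  · intro h μ hμ
    obtain ⟨Φ, hΦ, hΦμ⟩ := hμ.exists_isStateSection
    obtain ⟨φ, hφ, hφΦ⟩ := h Φ hΦ
    refine ⟨φ, hφ, fun p hpR hp ↦ ?_⟩
    have hA := isAbelianVN_doubleCommutant_singleton hp.1
    have hAR := doubleCommutant_singleton_subset hpR
    have hpA := mem_doubleCommutant_singleton p
    rw [hφΦ _ hA hAR p hpA, hΦμ _ hA hAR p (mem_projections_iff.2 ⟨hpA, hp⟩)]
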